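/- arXiv:2111.08886 — 2 statements merged into one kernel-verified Lean document; each statement's English description precedes it below -/
import Mathlib

section
/- Let p > 3 be a prime, let r > 2 be a natural number with gcd(r, p − 1) = 1, and let k be a natural number with p − 1 dividing kr − 1. For Q ∈ F_p[x], the set (xʳ, Q) = {(xʳ, Q(x)) : x ∈ F_p} is a maximum Sidon set over F_p × F_p if and only if the reduction of the composed polynomial Q(xᵏ) modulo x^p − x is a quadratic polynomial. -/
open Polynomial

/-- A subset `A` of an abelian group is a Sidon set if whenever
`a₁ - a₂ = a₃ - a₄` with all four elements in `A`, then `{a₁, a₄} = {a₂, a₃}`. -/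
def IsSidon {G : Type*} [AddCommGroup G] (A : Set G) : Prop :=
  ∀ a₁ ∈ A, ∀ a₂ ∈ A, ∀ a₃ ∈ A, ∀ a₄ ∈ A,
    a₁ - a₂ = a₃ - a₄ → ({a₁, a₄} : Set G) = {a₂, a₃}

/-- The set `(P,Q) = {(P(x), Q(x)) : x ∈ F}`. -/
def polyGraph {F : Type*} [Field F] (P Q : F[X]) : Set (F × F) :=
  Set.range fun x : F => (P.eval x, Q.eval x)

/-- A maximum Sidon set over `F × F`: a Sidon set with exactly `|F|` elements. -/
def IsMaxSidon {F : Type*} [Field F] [Fintype F] (A : Set (F × F)) : Prop :=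
  IsSidon A ∧ A.ncard = Fintype.card F

/-- A polynomial `P` is Sidon if there is `Q` with `(P,Q)` a maximum Sidon set. -/
def IsSidonPoly {F : Type*} [Field F] [Fintype F] (P : F[X]) : Prop :=
  ∃ Q : F[X], IsMaxSidon (polyGraph P Q)

/-- A permutation polynomial: its evaluation map is a bijection of `F`. -/
def IsPermPoly {F : Type*} [Field F] (R : F[X]) : Prop :=
  Function.Bijective fun x : F => R.eval x

/-- Sidon equivalence: `P' = R ∘ P ∘ T` (as functions on `F`)
for permutation polynomials `R`, `T`. -/
def SidonEquiv {F : Type*} [Field F] (P P' : F[X]) : Prop :=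
  ∃ R T : F[X], IsPermPoly R ∧ IsPermPoly T ∧
    ∀ x : F, P'.eval x = R.eval (P.eval (T.eval x))

/-!
A set `{(R x, Q x)}` with `R` a permutation and `S` its inverse is the graph of `f = Q ∘ S`, and a
graph is Sidon exactly when all differences `x ↦ f (x + d) - f x`, `d ≠ 0`, are injective. The claim
is therefore that over `𝔽_p` these planar functions are the quadratic polynomials.

If `f` is planar on `𝔽_p`, then so is `f + c x`, and `∑ₓ ∑_y (f y - f x) ^ k = -∑ᵥ v ^ k`. Expanding
the left side for `k = 2m`, induction gives `∑ₓ f x ^ m = 0` for `2m < p - 1`, while for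
`2m = p - 1` the square of this sum is a constant independent of `f`. Applied to `f + c x` and read
as a polynomial identity in `c`, this gives `∑ₓ x ^ i * f x ^ j = 0` for `2(i + j) ≤ p - 1`, except
possibly if `2j = p - 1`. If `f` has degree `3 ≤ d < p`, dividing `p - 1 = j d + i` produces such a
pair for which `x ^ i * f x ^ j` has degree exactly `p - 1`, so that its sum is nonzero.
-/

/-- A planar function between abelian groups: every difference function with nonzero shift is
injective. Between finite groups of equal order this is the usual requirement that the difference
functions be bijective. -/
def IsPlanar {G H : Type*} [AddCommGroup G] [AddCommGroup H] (f : G → H) : Prop :=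
  ∀ d : G, d ≠ 0 → Function.Injective fun x => f (x + d) - f x

theorem IsPlanar.add_addMonoidHom {G H : Type*} [AddCommGroup G] [AddCommGroup H] {f : G → H}
    (hf : IsPlanar f) (φ : G →+ H) : IsPlanar fun x => f x + φ x := by
  intro d hd x y hxy
  apply hf d hd
  simpa only [map_add, add_sub_add_comm, add_sub_cancel_left, add_left_inj] using hxy

theorem isSidon_graphOn_univ_iff {G H : Type*} [AddCommGroup G] [AddCommGroup H] (f : G → H) :
    IsSidon (Set.univ.graphOn f) ↔ IsPlanar f := by
  simp only [IsSidon, Set.graphOn, Set.forall_mem_image, Set.mem_univ, true_imp_iff]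
  constructor
  · intro h d hd x y hxy
    have hpair := @h (x + d) x (y + d) y (by simpa [Prod.ext_iff] using hxy)
    have hmem : (x, f x) ∈ ({(x + d, f (x + d)), (y, f y)} : Set (G × H)) := by simp [hpair]
    rcases hmem with hshift | hy
    · simp [Prod.ext_iff, hd] at hshift
    · exact congrArg Prod.fst hy
  · intro hf a b c e heq
    obtain ⟨hfst, hsnd⟩ := Prod.mk.inj heq
    by_cases hab : a = b
    · obtain rfl : c = e := by rwa [hab, sub_self, eq_comm, sub_eq_zero] at hfst
      rw [hab]
    · obtain rfl : b = e := by
        apply hf (a - b) (sub_ne_zero.2 hab)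
        dsimp only
        rwa [add_sub_cancel, hfst, add_sub_cancel]
      obtain rfl : a = c := sub_left_injective hfst
      exact Set.pair_comm _ _

theorem isMaxSidon_polyGraph_iff_isPlanar {F : Type*} [Field F] [Fintype F] {R S : F[X]} (Q : F[X])
    (hSR : ∀ x, S.eval (R.eval x) = x) :
    IsMaxSidon (polyGraph R Q) ↔ IsPlanar fun y => (Q.comp S).eval y := by
  have hR : Function.Surjective fun x => R.eval x :=
    Finite.surjective_of_injective (Function.LeftInverse.injective (g := fun y => S.eval y) hSR)
  have hgraph : polyGraph R Q = Set.univ.graphOn fun y => (Q.comp S).eval y := by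
    rw [Set.graphOn, Set.image_univ, ← hR.range_comp]
    simp only [polyGraph, Function.comp_def, eval_comp, hSR]
  rw [hgraph, IsMaxSidon, isSidon_graphOn_univ_iff, and_iff_left]
  rw [Set.ncard_graphOn, Set.ncard_univ, Nat.card_eq_fintype_card]

theorem IsPlanar.two_le_natDegree {R : Type*} [CommRing R] [Nontrivial R] {P : R[X]}
    (hP : IsPlanar fun x => P.eval x) : 2 ≤ P.natDegree := by
  by_contra! hlt
  obtain ⟨a, b, rfl⟩ := exists_eq_X_add_C_of_natDegree_le_one (Nat.le_of_lt_succ hlt)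
  have hdiff : (fun x => (C a * X + C b).eval (x + 1) - (C a * X + C b).eval x) 0 =
      (fun x => (C a * X + C b).eval (x + 1) - (C a * X + C b).eval x) 1 := by
    simp only [eval_add, eval_mul, eval_C, eval_X]
    ring
  exact zero_ne_one (hP 1 one_ne_zero hdiff)

theorem isPlanar_of_natDegree_eq_two {R : Type*} [CommRing R] [IsDomain R] (h2 : (2 : R) ≠ 0)
    {P : R[X]} (hdeg : P.natDegree = 2) : IsPlanar fun x => P.eval x := by
  intro d hd x y hxy
  have hlead : P.coeff 2 ≠ 0 := by
    rw [← hdeg]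
    exact leadingCoeff_ne_zero.2 (ne_zero_of_natDegree_gt (n := 0) (by omega))
  simp only [eval_eq_sum_range, hdeg, Finset.sum_range_succ, Finset.sum_range_zero] at hxy
  have hprod : 2 * P.coeff 2 * d * (x - y) = 0 := by linear_combination hxy
  exact sub_eq_zero.1
    ((mul_eq_zero.1 hprod).resolve_left (mul_ne_zero (mul_ne_zero h2 hlead) hd))

section DoubleSums

variable {R : Type*} [CommRing R]

theorem IsPlanar.sum_sum_sub_pow [Fintype R] {f : R → R} (hf : IsPlanar f) {k : ℕ} (hk : k ≠ 0) :
    ∑ x, ∑ y, (f y - f x) ^ k = -∑ v : R, v ^ k := by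
  classical
  have hshift : ∀ d : R, ∑ x, (f (x + d) - f x) ^ k =
      (1 - if d = 0 then 1 else 0) * ∑ v : R, v ^ k := by
    intro d
    split_ifs with hd
    · simp [hd, zero_pow hk]
    · rw [sub_zero, one_mul]
      exact (Finite.injective_iff_bijective.1 (hf d hd)).sum_comp fun v => v ^ k
  calc ∑ x, ∑ y, (f y - f x) ^ k
      = ∑ x, ∑ d, (f (x + d) - f x) ^ k := Finset.sum_congr rfl fun x _ =>
        (Equiv.sum_comp (Equiv.addLeft x) fun y => (f y - f x) ^ k).symm
    _ = ∑ d, ∑ x, (f (x + d) - f x) ^ k := Finset.sum_comm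
    _ = (∑ d : R, (1 - if d = 0 then 1 else 0)) * ∑ v : R, v ^ k := by
      simp_rw [hshift, ← Finset.sum_mul]
    _ = -∑ v : R, v ^ k := by simp

theorem sum_sum_sub_pow {ι : Type*} [Fintype ι] (g : ι → R) (k : ℕ) :
    ∑ x, ∑ y, (g y - g x) ^ k = ∑ i ∈ Finset.range (k + 1),
      (-1) ^ (i + k) * (k.choose i : R) * (∑ y, g y ^ i) * ∑ x, g x ^ (k - i) := by
  simp_rw [sub_pow, Finset.mul_sum, Finset.sum_mul]
  rw [Finset.sum_congr rfl fun x _ => Finset.sum_comm, Finset.sum_comm]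
  exact Finset.sum_congr rfl fun i _ => Finset.sum_congr rfl fun x _ =>
    Finset.sum_congr rfl fun y _ => by ring

theorem sum_sum_sub_pow_two_mul {ι : Type*} [Fintype ι] {g : ι → R} {m : ℕ}
    (hg : ∀ j < m, ∑ x, g x ^ j = 0) :
    ∑ x, ∑ y, (g y - g x) ^ (2 * m) =
      (-1) ^ m * ((2 * m).choose m : R) * (∑ x, g x ^ m) ^ 2 := by
  rw [sum_sum_sub_pow, Finset.sum_eq_single_of_mem m (Finset.mem_range.2 (by omega))]
  · rw [show 2 * m - m = m by omega, pow_add, pow_mul, neg_one_sq, one_pow]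
    ring
  · intro j hj hne
    rw [Finset.mem_range] at hj
    rcases hne.lt_or_gt with hlt | hgt
    · rw [hg j hlt, mul_zero, zero_mul]
    · rw [hg (2 * m - j) (by omega), mul_zero]

end DoubleSums

section FiniteField

variable {K : Type*} [Field K] [Fintype K]

theorem sum_pow_card_sub_one : ∑ x : K, x ^ (Fintype.card K - 1) = -1 := by
  classical
  have hpow : ∀ x : K, x ^ (Fintype.card K - 1) = 1 - if x = 0 then 1 else 0 := by
    intro x
    split_ifs with hx
    · rw [hx, zero_pow (Nat.sub_ne_zero_of_lt Fintype.one_lt_card), sub_self]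
    · rw [FiniteField.pow_card_sub_one_eq_one x hx, sub_zero]
  simp [hpow]

theorem sum_eval_eq_neg_coeff {P : K[X]} (hP : P.natDegree < Fintype.card K) :
    ∑ x, P.eval x = -P.coeff (Fintype.card K - 1) := by
  simp_rw [eval_eq_sum_range' hP]
  rw [Finset.sum_comm]
  simp_rw [← Finset.mul_sum]
  rw [Finset.sum_eq_single_of_mem (Fintype.card K - 1)
    (Finset.mem_range.2 (Nat.sub_lt Fintype.card_pos one_pos))]
  · rw [sum_pow_card_sub_one, mul_neg_one]
  · intro i hi hne
    rw [Finset.mem_range] at hi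
    rw [FiniteField.sum_pow_lt_card_sub_one K i (by omega), mul_zero]

theorem sum_pow_mul_eval_pow_ne_zero {P : K[X]} (hP : P ≠ 0) {i j : ℕ}
    (hij : i + j * P.natDegree = Fintype.card K - 1) : ∑ x, x ^ i * P.eval x ^ j ≠ 0 := by
  have hne : X ^ i * P ^ j ≠ 0 := mul_ne_zero (pow_ne_zero i X_ne_zero) (pow_ne_zero j hP)
  have hdeg : (X ^ i * P ^ j).natDegree = Fintype.card K - 1 := by
    rw [natDegree_mul (pow_ne_zero i X_ne_zero) (pow_ne_zero j hP), natDegree_X_pow,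
      natDegree_pow, hij]
  have hsum := sum_eval_eq_neg_coeff (hdeg.trans_lt (Nat.sub_lt Fintype.card_pos one_pos))
  simp only [eval_mul, eval_pow, eval_X] at hsum
  rw [hsum, neg_ne_zero, ← hdeg]
  exact leadingCoeff_ne_zero.2 hne

theorem natDegree_modByMonic_X_pow_card_sub_X_lt (P : K[X]) :
    (P %ₘ (X ^ Fintype.card K - X)).natDegree < Fintype.card K := by
  have hnat := FiniteField.X_pow_card_sub_X_natDegree_eq K (Fintype.one_lt_card (α := K))
  refine (natDegree_modByMonic_lt P (monic_X_pow_sub ?_) ?_).trans_eq hnat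
  · rw [degree_X]
    exact_mod_cast Fintype.one_lt_card (α := K)
  · rintro h
    exact Fintype.card_ne_zero (hnat.symm.trans (h ▸ natDegree_one))

theorem eval_modByMonic_X_pow_card_sub_X (P : K[X]) (x : K) :
    (P %ₘ (X ^ Fintype.card K - X)).eval x = P.eval x :=
  eval₂_modByMonic_eq_self_of_root (f := RingHom.id K) (by simp [FiniteField.pow_card])

theorem pow_eq_self_of_card_sub_one_dvd (hq : 2 < Fintype.card K) {n : ℕ}
    (hn : (Fintype.card K : ℤ) - 1 ∣ n - 1) (x : K) : x ^ n = x := by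
  have hpos : 1 ≤ n := by
    by_contra! hlt
    obtain rfl : n = 0 := by omega
    have := Int.le_of_dvd one_pos (by simpa using hn)
    omega
  obtain ⟨t, ht⟩ : Fintype.card K - 1 ∣ n - 1 := by
    zify [hpos, hq.le.trans' one_le_two]
    exact hn
  rw [show n = (Fintype.card K - 1) * t + 1 by omega, pow_succ, pow_mul]
  by_cases hx : x = 0
  · rw [hx, mul_zero]
  · rw [FiniteField.pow_card_sub_one_eq_one x hx, one_pow, one_mul]

end FiniteField

section MomentPoly

variable {R : Type*} [CommSemiring R] [Fintype R]

/-- The power sum `∑ₓ (f x + c x) ^ m` as a polynomial in `c`; its coefficients are, up to binomial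
factors, the mixed moments `∑ₓ x ^ i * f x ^ j` with `i + j = m`. -/
noncomputable def momentPoly (f : R → R) (m : ℕ) : R[X] :=
  ∑ x, (C x * X + C (f x)) ^ m

theorem eval_momentPoly (f : R → R) (m : ℕ) (c : R) :
    (momentPoly f m).eval c = ∑ x, (f x + c * x) ^ m := by
  simp only [momentPoly, eval_finsetSum, eval_pow, eval_add, eval_mul, eval_C, eval_X]
  exact Finset.sum_congr rfl fun x _ => by ring

theorem coeff_momentPoly (f : R → R) (i j : ℕ) :
    (momentPoly f (i + j)).coeff i = ((i + j).choose i : R) * ∑ x, x ^ i * f x ^ j := by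
  have hcomp : ∀ x, (C x * X + C (f x)) ^ (i + j) =
      ((X + C (f x)) ^ (i + j)).comp (C x * X) := fun x => by
    simp only [pow_comp, add_comp, X_comp, C_comp]
  rw [momentPoly, finsetSum_coeff, Finset.mul_sum]
  refine Finset.sum_congr rfl fun x _ => ?_
  rw [hcomp, comp_C_mul_X_coeff, coeff_X_add_C_pow, Nat.add_sub_cancel_left]
  ring

theorem natDegree_momentPoly_le (f : R → R) (m : ℕ) : (momentPoly f m).natDegree ≤ m :=
  natDegree_sum_le_of_forall_le _ _ fun x _ => by
    simpa using natDegree_pow_le_of_le m (natDegree_linear_le (a := x) (b := f x))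

end MomentPoly

theorem char_le_card (R : Type*) [AddGroupWithOne R] [Fintype R] (p : ℕ) [CharP R p] :
    p ≤ Fintype.card R :=
  Nat.le_of_dvd Fintype.card_pos ((CharP.cast_eq_zero_iff R p _).1 (Nat.cast_card_eq_zero R))

theorem natCast_choose_ne_zero {R : Type*} [AddGroupWithOne R] {p : ℕ} [Fact p.Prime] [CharP R p]
    {n i : ℕ} (hi : i ≤ n) (hn : n < p) : (n.choose i : R) ≠ 0 := by
  rw [Ne, CharP.cast_eq_zero_iff R p]
  intro hdvd
  have hfact : p ∣ n.factorial :=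
    hdvd.trans ⟨_, by rw [← Nat.choose_mul_factorial_mul_factorial hi, mul_assoc]⟩
  exact hn.not_ge ((Fact.out : p.Prime).dvd_factorial.1 hfact)

section PlanarMoments

variable {K : Type*} [Field K] [Fintype K] {p : ℕ} [Fact p.Prime] [CharP K p] {f : K → K}

theorem IsPlanar.sum_pow_eq_zero (hf : IsPlanar f) {m : ℕ} (hm : 2 * m < p - 1) :
    ∑ x, f x ^ m = 0 := by
  have hcard := char_le_card K p
  induction m using Nat.strong_induction_on with
  | _ m ih =>
    rcases eq_or_ne m 0 with rfl | hm0
    · simp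
    have hsq := sum_sum_sub_pow_two_mul fun j hj => ih j hj (by omega)
    rw [hf.sum_sum_sub_pow (by omega),
      FiniteField.sum_pow_lt_card_sub_one K (2 * m) (by omega), neg_zero] at hsq
    have hchoose : ((2 * m).choose m : K) ≠ 0 :=
      natCast_choose_ne_zero (p := p) (by omega) (by omega)
    simpa [hchoose] using hsq.symm

theorem IsPlanar.momentPoly_eq_zero (hf : IsPlanar f) {m : ℕ} (hm : 2 * m < p - 1) :
    momentPoly f m = 0 := by
  have hcard := char_le_card K p
  refine eq_zero_of_natDegree_lt_card_of_eval_eq_zero _ Function.injective_id (fun c => ?_)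
    ((natDegree_momentPoly_le f m).trans_lt (by omega))
  rw [id, eval_momentPoly]
  exact (hf.add_addMonoidHom (AddMonoidHom.mulLeft c)).sum_pow_eq_zero hm

theorem sum_pow_mul_pow_eq_zero_of_coeff_momentPoly {i j : ℕ} (hij : i + j < p)
    (hcoeff : (momentPoly f (i + j)).coeff i = 0) : ∑ x, x ^ i * f x ^ j = 0 := by
  rw [coeff_momentPoly] at hcoeff
  exact (mul_eq_zero.1 hcoeff).resolve_left
    (natCast_choose_ne_zero (p := p) (Nat.le_add_right i j) hij)

end PlanarMoments

theorem two_mul_mod_add_div_le {n d : ℕ} (hn : Even n) (hd : 3 ≤ d) (hdn : d ≤ n) :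
    2 * (n % d + n / d) ≤ n := by
  obtain ⟨e, rfl⟩ : ∃ e, d = e + 2 := ⟨d - 2, by omega⟩
  have hdiv := Nat.mod_add_div' n (e + 2)
  have hmod := Nat.mod_lt n (show 0 < e + 2 by omega)
  have hquot : 1 ≤ n / (e + 2) := Nat.div_pos hdn (by omega)
  suffices hmod_le : n % (e + 2) ≤ n / (e + 2) * e by linarith
  rcases hquot.eq_or_lt with hone | htwo
  · rw [← hone] at hdiv ⊢
    obtain ⟨t, rfl⟩ := hn
    omega
  · have : 2 * e ≤ n / (e + 2) * e := Nat.mul_le_mul_right e htwo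
    omega

section PrimeField

variable {p : ℕ} [Fact p.Prime] {f : ZMod p → ZMod p}

theorem IsPlanar.mul_sq_sum_pow_half_eq_one (hf : IsPlanar f) {m : ℕ} (hm : 2 * m = p - 1) :
    (-1) ^ m * ((2 * m).choose m : ZMod p) * (∑ x, f x ^ m) ^ 2 = 1 := by
  have hp := (Fact.out : p.Prime).two_le
  have hpow : ∑ v : ZMod p, v ^ (p - 1) = -1 := by
    simpa only [ZMod.card] using sum_pow_card_sub_one (K := ZMod p)
  rw [← sum_sum_sub_pow_two_mul fun j hj => hf.sum_pow_eq_zero (p := p) (by omega),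
    hf.sum_sum_sub_pow (by omega), hm, hpow, neg_neg]

theorem IsPlanar.natDegree_momentPoly_half_eq_zero (hf : IsPlanar f) {m : ℕ} (hm : 2 * m = p - 1) :
    (momentPoly f m).natDegree = 0 := by
  have hp := (Fact.out : p.Prime).two_le
  set a : ZMod p := (-1) ^ m * ((2 * m).choose m : ZMod p) with ha
  have hdeg : (C a * momentPoly f m ^ 2 - 1).natDegree < Fintype.card (ZMod p) := by
    have hsq := natDegree_pow_le_of_le 2 (natDegree_momentPoly_le f m)
    rw [ZMod.card, ← C_1, natDegree_sub_C]
    exact ((natDegree_C_mul_le _ _).trans hsq).trans_lt (by omega)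
  have hzero : C a * momentPoly f m ^ 2 - 1 = 0 := by
    refine eq_zero_of_natDegree_lt_card_of_eval_eq_zero _ Function.injective_id (fun c => ?_) hdeg
    rw [id, eval_sub, eval_mul, eval_C, eval_pow, eval_momentPoly, eval_one, ha, sub_eq_zero]
    exact (hf.add_addMonoidHom (AddMonoidHom.mulLeft c)).mul_sq_sum_pow_half_eq_one hm
  have hunit : IsUnit (momentPoly f m) :=
    .of_mul_eq_one (C a * momentPoly f m) (by linear_combination hzero)
  exact natDegree_eq_zero_of_isUnit hunit

theorem IsPlanar.sum_pow_mul_pow_eq_zero (hf : IsPlanar f) {i j : ℕ}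
    (hij : 2 * (i + j) ≤ p - 1) (hj : 2 * j ≠ p - 1) : ∑ x, x ^ i * f x ^ j = 0 := by
  have hp := (Fact.out : p.Prime).two_le
  refine sum_pow_mul_pow_eq_zero_of_coeff_momentPoly (p := p) (by omega) ?_
  rcases hij.lt_or_eq with hlt | heq
  · rw [hf.momentPoly_eq_zero hlt, coeff_zero]
  · exact coeff_eq_zero_of_natDegree_lt (by rw [hf.natDegree_momentPoly_half_eq_zero heq]; omega)

theorem IsPlanar.natDegree_eq_two {P : (ZMod p)[X]} (hdeg : P.natDegree < p)
    (hP : IsPlanar fun x => P.eval x) : P.natDegree = 2 := by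
  have htwo := hP.two_le_natDegree
  by_contra hne
  set d := P.natDegree
  have heven : Even (p - 1) := (Fact.out : p.Prime).even_sub_one (by omega)
  have hdiv : (p - 1) % d + (p - 1) / d * d = p - 1 := Nat.mod_add_div' (p - 1) d
  have hle : 2 * ((p - 1) % d + (p - 1) / d) ≤ p - 1 :=
    two_mul_mod_add_div_le heven (by omega) (by omega)
  have hstrict : 2 * ((p - 1) / d) ≠ p - 1 := by
    have : (p - 1) / d * 3 ≤ (p - 1) / d * d := Nat.mul_le_mul_left _ (by omega)
    omega
  refine sum_pow_mul_eval_pow_ne_zero (ne_zero_of_natDegree_gt htwo) ?_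
    (hP.sum_pow_mul_pow_eq_zero hle hstrict)
  rw [ZMod.card, hdiv]

theorem isPlanar_eval_iff_natDegree_eq_two {P : (ZMod p)[X]} (hdeg : P.natDegree < p) :
    (IsPlanar fun x => P.eval x) ↔ P.natDegree = 2 := by
  refine ⟨IsPlanar.natDegree_eq_two hdeg, fun h => isPlanar_of_natDegree_eq_two ?_ h⟩
  exact Ring.two_ne_zero (by rw [ZMod.ringChar_zmod_n]; omega)

end PrimeField

theorem stmt_13_general (p : ℕ) [Fact p.Prime] (R S Q : (ZMod p)[X])
    (hSR : ∀ x, S.eval (R.eval x) = x) :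
    IsMaxSidon (polyGraph R Q) ↔ ((Q.comp S) %ₘ (X ^ p - X)).natDegree = 2 := by
  have hdeg := natDegree_modByMonic_X_pow_card_sub_X_lt (Q.comp S)
  have heval := eval_modByMonic_X_pow_card_sub_X (Q.comp S)
  rw [ZMod.card] at hdeg heval
  rw [isMaxSidon_polyGraph_iff_isPlanar Q hSR, ← isPlanar_eval_iff_natDegree_eq_two hdeg]
  simp only [heval]

/-- for `p > 3` prime, `r > 2` coprime to `p - 1`, and `k` with
`p - 1 ∣ kr - 1`, the set `(xʳ, Q)` is a maximum Sidon set iff the reduction of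
`Q(xᵏ)` modulo `x^p - x` is quadratic. -/
theorem stmt_13 (p : ℕ) [Fact p.Prime] (hp : 3 < p)
    (r : ℕ) (hr : 2 < r) (hcop : Nat.Coprime r (p - 1))
    (k : ℕ) (hk : ((p : ℤ) - 1) ∣ ((k : ℤ) * r - 1))
    (Q : (ZMod p)[X]) :
    IsMaxSidon (polyGraph ((X : (ZMod p)[X]) ^ r) Q) ↔
      ((Q.comp (X ^ k)) %ₘ (X ^ p - X)).natDegree = 2 :=
  stmt_13_general p (X ^ r) (X ^ k) Q fun x => by
    simpa [← pow_mul, mul_comm] using pow_eq_self_of_card_sub_one_dvd (K := ZMod p) (n := k * r)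
      (by rw [ZMod.card]; omega) (by simpa using hk) x
end

section
/- Let q be a prime power with char(F_q) > 3 and let k ∈ F_q be a nonsquare. Then: x³ ∼_S x if and only if q ≡ −1 (mod 6); x³ is not Sidon equivalent to x²; x³ − x is Sidon equivalent to neither x nor x²; x³ − kx is not Sidon equivalent to x; and x³ − kx ∼_S x² if and only if q = 5. -/
open Polynomial

/-! A Sidon equivalence permutes the fibres of the evaluation maps. The map `x ↦ x` has only
singleton fibres, while `x ↦ x²` has one singleton fibre and all its other nonempty fibres have
two elements; so everything is decided by fibres.

The fibres of `x³` away from `0` are the cosets of the group of cube roots of unity, so they have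
one or three elements, according to whether `3` divides `q - 1`.

Distinct `x`, `y` lie in one fibre of `x³ - kx` iff `x² + xy + y² = k`, and then `-x - y` lies in
it too. If `k` is not a square, then `{0}` is a fibre, so an equivalence with `x²` forces every
`x ≠ 0` into a fibre of exactly two elements. There `-x - y` is `x` or `y`, hence `3x² = k` or
`3x² = 4k`, which leaves at most four nonzero `x`. -/

section Power

theorem coprime_card_iff_forall_pow_eq_one {G : Type*} [Group G] [Finite G] {n : ℕ} :
    (Nat.card G).Coprime n ↔ ∀ g : G, g ^ n = 1 → g = 1 := by
  refine ⟨fun h g hg => h.pow_left_bijective.injective (by simpa using hg), fun h => ?_⟩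
  refine Nat.Coprime.symm <| Nat.coprime_of_dvd fun p hp hpn hpG => hp.ne_one ?_
  have : Fact p.Prime := ⟨hp⟩
  obtain ⟨g, hg⟩ := exists_prime_orderOf_dvd_card' p hpG
  rw [← hg, orderOf_eq_one_iff]
  exact h g (orderOf_dvd_iff_pow_eq_one.1 (hg ▸ hpn))

theorem pow_left_injective_iff_forall_pow_eq_one {K : Type*} [CommGroupWithZero K] {n : ℕ}
    (hn : n ≠ 0) : Function.Injective (fun x : K => x ^ n) ↔ ∀ x : K, x ^ n = 1 → x = 1 := by
  refine ⟨fun h x hx => h (by simpa using hx), fun h x y (hxy : x ^ n = y ^ n) => ?_⟩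
  rcases eq_or_ne y 0 with rfl | hy
  · simpa [hn] using hxy
  · exact eq_of_div_eq_one (h _ (by rw [div_pow, hxy, div_self (pow_ne_zero n hy)]))

end Power

section FiniteField

variable {F : Type*} [Field F]

theorem three_ne_zero_of_ringChar_ne_three {R : Type*} [NonAssocRing R] [Nontrivial R]
    (hR : ringChar R ≠ 3) : (3 : R) ≠ 0 :=
  mod_cast CharP.cast_ne_zero_of_ne_of_prime R Nat.prime_three hR

theorem exists_forall_eval_eq [Finite F] (f : F → F) : ∃ P : F[X], ∀ x, P.eval x = f x := by
  classical
  have := Fintype.ofFinite F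
  exact ⟨Lagrange.interpolate Finset.univ id f, fun x =>
    Lagrange.eval_interpolate_at_node f Function.injective_id.injOn (Finset.mem_univ x)⟩

theorem isPermPoly_X_pow_iff [Fintype F] {n : ℕ} (hn : n ≠ 0) :
    IsPermPoly (X ^ n : F[X]) ↔ (Fintype.card F - 1).Coprime n := by
  rw [IsPermPoly, ← Finite.injective_iff_bijective, ← Nat.card_eq_fintype_card, ← Nat.card_units,
    coprime_card_iff_forall_pow_eq_one]
  simp only [eval_pow, eval_X, pow_left_injective_iff_forall_pow_eq_one hn]
  refine ⟨fun h u hu => Units.ext (h u (by simpa using congrArg Units.val hu)), fun h x hx => ?_⟩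
  have hx0 : x ≠ 0 := by
    rintro rfl
    simp [hn] at hx
  simpa [Units.ext_iff] using h (Units.mk0 x hx0) (by simpa [Units.ext_iff] using hx)

theorem not_prime_dvd_card [Fintype F] {p : ℕ} (hp : p.Prime) (hF : ringChar F ≠ p) :
    ¬ p ∣ Fintype.card F := by
  have : Fact p.Prime := ⟨hp⟩
  rw [← prime_dvd_char_iff_dvd_card,
    Nat.prime_dvd_prime_iff_eq hp (CharP.char_is_prime F (ringChar F))]
  exact hF.symm

theorem card_mod_six_eq_one_or_five [Fintype F] (h2 : ringChar F ≠ 2) (h3 : ringChar F ≠ 3) :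
    Fintype.card F % 6 = 1 ∨ Fintype.card F % 6 = 5 := by
  have := not_prime_dvd_card Nat.prime_two h2
  have := not_prime_dvd_card Nat.prime_three h3
  omega

theorem isPermPoly_X_pow_three_iff [Fintype F] (h2 : ringChar F ≠ 2) (h3 : ringChar F ≠ 3) :
    IsPermPoly (X ^ 3 : F[X]) ↔ Fintype.card F % 6 = 5 := by
  rw [isPermPoly_X_pow_iff three_ne_zero, Nat.coprime_comm,
    Nat.prime_three.coprime_iff_not_dvd]
  have := card_mod_six_eq_one_or_five h2 h3
  omega

theorem pow_card_div_two_eq_neg_one_of_not_isSquare [Fintype F] (hF : ringChar F ≠ 2) {k : F}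
    (hk : ¬ IsSquare k) : k ^ (Fintype.card F / 2) = -1 := by
  have hk0 : k ≠ 0 := by
    rintro rfl
    exact hk IsSquare.zero
  exact (FiniteField.pow_dichotomy hF hk0).resolve_left
    (mt (FiniteField.isSquare_iff hF hk0).2 hk)

theorem exists_mul_sq_add_mul_sq_eq [Finite F] (hF : ringChar F ≠ 2) {a b : F} (ha : a ≠ 0)
    (hb : b ≠ 0) (c : F) : ∃ u v : F, a * u ^ 2 + b * v ^ 2 = c := by
  have := Fintype.ofFinite F
  obtain ⟨u, v, huv⟩ := FiniteField.exists_root_sum_quadratic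
    (f := C a * X ^ 2 - C c) (g := C b * X ^ 2) (by compute_degree!) (by compute_degree!)
    (FiniteField.odd_card_of_char_ne_two hF)
  simp only [eval_sub, eval_mul, eval_C, eval_pow, eval_X] at huv
  exact ⟨u, v, by linear_combination huv⟩

theorem exists_ne_sq_add_mul_add_sq_eq [Finite F] (h2 : ringChar F ≠ 2) (h3 : ringChar F ≠ 3)
    {k : F} (hk : k ≠ 0) : ∃ x y : F, x ≠ y ∧ x ^ 2 + x * y + y ^ 2 = k := by
  have three_ne_zero := three_ne_zero_of_ringChar_ne_three h3
  obtain ⟨u, v, huv⟩ := exists_mul_sq_add_mul_sq_eq h2 one_ne_zero three_ne_zero k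
  rcases eq_or_ne u 0 with rfl | hu
  · have hv : v ≠ 0 := by
      rintro rfl
      exact hk (by simpa using huv.symm)
    refine ⟨-2 * v, v, fun h => mul_ne_zero three_ne_zero hv ?_, ?_⟩
    · linear_combination -h
    · linear_combination huv
  · refine ⟨v + u, v - u, fun h => mul_ne_zero (Ring.two_ne_zero h2) hu ?_, ?_⟩
    · linear_combination h
    · linear_combination huv

end FiniteField

section Fibres

variable {F : Type*} [Field F] {P P' : F[X]}

theorem SidonEquiv.exists_perm_eval_eq_iff (h : SidonEquiv P P') :
    ∃ e : Equiv.Perm F, ∀ x y, P.eval x = P.eval y ↔ P'.eval (e x) = P'.eval (e y) := by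
  obtain ⟨R, T, hR, hT, hP'⟩ := h
  let e := Equiv.ofBijective _ hT
  have apply_e_symm (x : F) : T.eval (e.symm x) = x := e.apply_symm_apply x
  refine ⟨e.symm, fun x y => ?_⟩
  rw [hP', hP', apply_e_symm, apply_e_symm]
  exact hR.injective.eq_iff.symm

theorem SidonEquiv.injective_eval_iff (h : SidonEquiv P P') :
    (Function.Injective fun x => P.eval x) ↔ Function.Injective fun x => P'.eval x := by
  obtain ⟨e, he⟩ := h.exists_perm_eval_eq_iff
  rw [← e.injective_comp fun x => P'.eval x]
  simp only [Function.Injective, Function.comp_apply, he]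

theorem sidonEquiv_X_iff [Finite F] : SidonEquiv P X ↔ IsPermPoly P := by
  refine ⟨fun h => Finite.injective_iff_bijective.1 (h.injective_eval_iff.2 fun x y => by simp),
    fun hP => ?_⟩
  let e := Equiv.ofBijective _ hP
  obtain ⟨R, hR⟩ := exists_forall_eval_eq e.symm
  refine ⟨R, X, ?_, ?_, fun x => ?_⟩
  · simpa only [IsPermPoly, hR] using e.symm.bijective
  · simpa only [IsPermPoly, eval_X] using! Function.bijective_id
  · rw [hR, eval_X]
    exact (e.symm_apply_apply x).symm

theorem SidonEquiv.eq_or_eq_or_eq_of_X_sq (h : SidonEquiv P (X ^ 2)) {x y z : F}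
    (hxy : P.eval x = P.eval y) (hxz : P.eval x = P.eval z) : x = y ∨ x = z ∨ y = z := by
  obtain ⟨e, he⟩ := h.exists_perm_eval_eq_iff
  simp only [he, eval_pow, eval_X, sq_eq_sq_iff_eq_or_eq_neg] at hxy hxz
  rw [← e.injective.eq_iff, ← e.injective.eq_iff (a := x), ← e.injective.eq_iff (a := y)]
  grind

theorem SidonEquiv.exists_forall_ne_of_X_sq (hF : ringChar F ≠ 2) (h : SidonEquiv P (X ^ 2)) :
    ∃ s : F, ∀ x ≠ s, ∃ y ≠ x, P.eval x = P.eval y := by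
  obtain ⟨e, he⟩ := h.exists_perm_eval_eq_iff
  refine ⟨e.symm 0, fun x hx => ⟨e.symm (-e x), fun hy => hx ?_, by simp [he]⟩⟩
  rw [Equiv.symm_apply_eq, neg_eq_iff_add_eq_zero, ← two_mul] at hy
  rw [Equiv.eq_symm_apply]
  exact (mul_eq_zero.1 hy).resolve_left (Ring.two_ne_zero hF)

theorem not_sidonEquiv_X_pow_three_X_sq (hF : ringChar F ≠ 2) :
    ¬ SidonEquiv (X ^ 3 : F[X]) (X ^ 2) := by
  intro h
  have sq_not_injective : ¬ Function.Injective fun x : F => (X ^ 2 : F[X]).eval x := fun hinj =>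
    Ring.neg_one_ne_one_of_char_ne_two hF (hinj (by simp))
  obtain ⟨ω, hω, hω1⟩ : ∃ ω : F, ω ^ 3 = 1 ∧ ω ≠ 1 := by
    rw [← h.injective_eval_iff] at sq_not_injective
    simpa [pow_left_injective_iff_forall_pow_eq_one] using sq_not_injective
  have hω0 : ω ≠ 0 := by
    rintro rfl
    simp at hω
  rcases h.eq_or_eq_or_eq_of_X_sq (x := 1) (y := ω) (z := ω ^ 2) (by simp [hω])
    (by simp [← pow_mul, mul_comm 2 3, pow_mul ω 3 2, hω]) with h1ω | h1ωω | hωωω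
  · exact hω1 h1ω.symm
  · exact hω1 (by linear_combination hω + ω * h1ωω)
  · exact hω1 (mul_left_cancel₀ hω0 (by linear_combination -hωωω))

end Fibres

section DepressedCubic

variable {F : Type*} [Field F] {k : F}

theorem eval_X_pow_three_sub_C_mul_X_eq_iff {x y : F} :
    (X ^ 3 - C k * X).eval x = (X ^ 3 - C k * X).eval y ↔
      x = y ∨ x ^ 2 + x * y + y ^ 2 = k := by
  rw [← sub_eq_zero, ← sub_eq_zero (a := x), ← sub_eq_zero (b := k), ← mul_eq_zero]
  simp only [eval_sub, eval_pow, eval_mul, eval_C, eval_X]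
  ring_nf

theorem not_sidonEquiv_X_pow_three_sub_C_mul_X_X [Finite F] (h2 : ringChar F ≠ 2)
    (h3 : ringChar F ≠ 3) (hk : k ≠ 0) : ¬ SidonEquiv (X ^ 3 - C k * X) X := by
  rw [sidonEquiv_X_iff]
  intro h
  obtain ⟨x, y, hxy, hQ⟩ := exists_ne_sq_add_mul_add_sq_eq h2 h3 hk
  exact hxy (h.injective (eval_X_pow_three_sub_C_mul_X_eq_iff.2 (.inr hQ)))

theorem not_sidonEquiv_X_pow_three_sub_C_mul_X_X_sq_of_isSquare (hF : ringChar F ≠ 2)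
    (hk0 : k ≠ 0) (hk : IsSquare k) : ¬ SidonEquiv (X ^ 3 - C k * X) (X ^ 2) := by
  obtain ⟨c, rfl⟩ := hk
  have hc : c ≠ 0 := left_ne_zero_of_mul hk0
  intro h
  rcases h.eq_or_eq_or_eq_of_X_sq (x := 0) (y := c) (z := -c) (by simp; ring) (by simp; ring)
    with h0c | h0c | hcc
  · exact hc h0c.symm
  · exact hc (neg_eq_zero.1 h0c.symm)
  · exact hc ((Ring.eq_self_iff_eq_zero_of_char_ne_two hF).1 hcc.symm)

theorem SidonEquiv.three_mul_sq_eq_of_X_sq (hF : ringChar F ≠ 2) (hk : ¬ IsSquare k)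
    (h : SidonEquiv (X ^ 3 - C k * X) (X ^ 2)) {x : F} (hx : x ≠ 0) :
    3 * x ^ 2 = k ∨ 3 * x ^ 2 = 4 * k := by
  obtain ⟨s, hs⟩ := h.exists_forall_ne_of_X_sq hF
  have hs0 : s = 0 := by
    by_contra hne
    obtain ⟨y, hy, h0y⟩ := hs 0 (Ne.symm hne)
    have hyk := (eval_X_pow_three_sub_C_mul_X_eq_iff.1 h0y).resolve_left hy.symm
    exact hk ⟨y, by linear_combination -hyk⟩
  obtain ⟨y, hy, hxy⟩ := hs x (hs0 ▸ hx)
  have hQ := (eval_X_pow_three_sub_C_mul_X_eq_iff.1 hxy).resolve_left hy.symm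
  have third_root : (X ^ 3 - C k * X).eval x = (X ^ 3 - C k * X).eval (-x - y) :=
    eval_X_pow_three_sub_C_mul_X_eq_iff.2 (.inr (by linear_combination hQ))
  rcases h.eq_or_eq_or_eq_of_X_sq hxy third_root with hxy | hxz | hyz
  · exact absurd hxy.symm hy
  · left
    linear_combination hQ - (y - x) * hxz
  · right
    linear_combination 4 * hQ - (x + 2 * y) * hyz

theorem card_le_five_of_sidonEquiv [Fintype F] (h2 : ringChar F ≠ 2) (h3 : ringChar F ≠ 3)
    (hk : ¬ IsSquare k) (h : SidonEquiv (X ^ 3 - C k * X) (X ^ 2)) : Fintype.card F ≤ 5 := by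
  let p : F[X] := X * ((C 3 * X ^ 2 - C k) * (C 3 * X ^ 2 - C (4 * k)))
  have hp : p.natDegree = 5 := by
    have nine_ne_zero : (9 : F) ≠ 0 := by
      rw [show (9 : F) = 3 ^ 2 by norm_num]
      exact pow_ne_zero 2 (three_ne_zero_of_ringChar_ne_three h3)
    simp only [p]
    compute_degree!
  have eval_p (x : F) : p.eval x = 0 := by
    rcases eq_or_ne x 0 with rfl | hx
    · simp [p]
    · have := h.three_mul_sq_eq_of_X_sq h2 hk hx
      simpa [p, sub_eq_zero, hx] using this
  by_contra! hcard
  have hp0 := eq_zero_of_natDegree_lt_card_of_eval_eq_zero p Function.injective_id eval_p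
    (hp.trans_lt hcard)
  simp [hp0] at hp

theorem cube_sub_mul_eq_of_five_eq_zero {R : Type*} [CommRing R] (h5 : (5 : R) = 0) {k x y : R}
    (hk : k ^ 2 = -1) (hx : x ^ 5 = x) (hy : y = 3 * x ^ 3 + 3 * (1 + k) * x ^ 2 + 2 * k * x) :
    y ^ 3 - k * y = (1 - k) * x ^ 2 := by
  have hy_sq : y ^ 2 = 2 * (k - 1) * x ^ 3 + 3 * (1 + k) * x := by
    rw [hy]
    linear_combination (9 * x + 18 * (1 + k)) * hx + (9 * x ^ 4 + 12 * x ^ 3 + 4 * x ^ 2) * hk +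
      (6 * k * x ^ 4 + 2 * (k - 1) * x ^ 3 + x ^ 2 + 3 * (1 + k) * x) * h5
  rw [pow_succ, hy_sq, hy]
  linear_combination (6 * (k - 1) * x + 6 * (k ^ 2 - 1)) * hx +
    (4 * x ^ 4 + 9 * x ^ 3 + 3 * x ^ 2 + 4 * x) * hk +
    ((k + 1) * x ^ 4 + 3 * k * x ^ 3 + 2 * (k - 1) * x ^ 2 - 2 * x) * h5

theorem sidonEquiv_X_sq_of_card_eq_five [Fintype F] (hF : Fintype.card F = 5)
    (hk : ¬ IsSquare k) : SidonEquiv (X ^ 3 - C k * X) (X ^ 2) := by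
  have h5 : (5 : F) = 0 := by simpa [hF] using FiniteField.cast_card_eq_zero F
  have hchar : ringChar F ≠ 2 := fun h2 => by
    have := FiniteField.even_card_of_char_two h2
    omega
  have hk2 : k ^ 2 = -1 := by
    simpa [hF] using pow_card_div_two_eq_neg_one_of_not_isSquare hchar hk
  have h3 : (3 : F) ≠ 0 := fun h => one_ne_zero (α := F) (by linear_combination 2 * h - h5)
  have hcube : IsPermPoly (X ^ 3 : F[X]) :=
    (isPermPoly_X_pow_iff three_ne_zero).2 (by norm_num [hF])
  let r : F := 3 * (1 + k)
  have hrk : r * (1 - k) = 1 := by linear_combination h5 - 3 * hk2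
  have hr : r ≠ 0 := left_ne_zero_of_mul_eq_one hrk
  -- As `k ^ 2 = -1`, the fibres of `x ↦ x ^ 3 - k * x` are `{0}`, `{1, k}` and `{-1, -k}`.
  -- The map `T` fixes `0`, sends `{1, -1}` to `{1, k}` and `{k, -k}` to `{-1, -k}`.
  let T : F[X] := C 3 * ((X - C r) ^ 3 + C (r ^ 3))
  refine ⟨C r * X, T, ?_, ?_, fun x => ?_⟩
  · exact Finite.injective_iff_bijective.1 fun x y hxy => by simpa [hr] using hxy
  · refine Finite.injective_iff_bijective.1 fun x y hxy => ?_
    exact sub_left_injective (hcube.injective (by simpa [T, h3] using hxy))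
  · have hx : x ^ 5 = x := hF ▸ FiniteField.pow_card x
    have hT : T.eval x = 3 * x ^ 3 + 3 * (1 + k) * x ^ 2 + 2 * k * x := by
      simp only [T, r, eval_add, eval_sub, eval_mul, eval_pow, eval_C, eval_X]
      linear_combination 81 * x * hk2 + (32 * k * x - 6 * (1 + k) * x ^ 2) * h5
    have hPT := cube_sub_mul_eq_of_five_eq_zero h5 hk2 hx hT
    simp only [eval_sub, eval_mul, eval_pow, eval_C, eval_X, hPT]
    linear_combination -x ^ 2 * hrk

end DepressedCubic

/-- equivalences between cubic classes and `x`, `x²`: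
`x³ ∼ x` iff `q ≡ -1 (mod 6)`; `x³ ≁ x²`; `x³ - x` is equivalent to neither `x`
nor `x²`; `x³ - kx ≁ x`; and `x³ - kx ∼ x²` iff `q = 5`. -/
theorem stmt_15 {F : Type*} [Field F] [Fintype F] (hchar : 3 < ringChar F)
    (k : F) (hk : ¬ ∃ y : F, y ^ 2 = k) :
    (SidonEquiv ((X : F[X]) ^ 3) (X : F[X]) ↔ Fintype.card F % 6 = 5) ∧
    ¬ SidonEquiv ((X : F[X]) ^ 3) ((X : F[X]) ^ 2) ∧
    ¬ SidonEquiv ((X : F[X]) ^ 3 - X) (X : F[X]) ∧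
    ¬ SidonEquiv ((X : F[X]) ^ 3 - X) ((X : F[X]) ^ 2) ∧
    ¬ SidonEquiv ((X : F[X]) ^ 3 - C k * X) (X : F[X]) ∧
    (SidonEquiv ((X : F[X]) ^ 3 - C k * X) ((X : F[X]) ^ 2) ↔ Fintype.card F = 5) := by
  have h2 : ringChar F ≠ 2 := by omega
  have h3 : ringChar F ≠ 3 := by omega
  have hk' : ¬ IsSquare k := by simpa only [isSquare_iff_exists_sq, eq_comm] using hk
  have hk0 : k ≠ 0 := fun h0 => hk' (h0 ▸ IsSquare.zero)
  refine ⟨?_, not_sidonEquiv_X_pow_three_X_sq h2, ?_, ?_,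
    not_sidonEquiv_X_pow_three_sub_C_mul_X_X h2 h3 hk0, fun h => ?_,
    fun hF => sidonEquiv_X_sq_of_card_eq_five hF hk'⟩
  · rw [sidonEquiv_X_iff, isPermPoly_X_pow_three_iff h2 h3]
  · simpa using not_sidonEquiv_X_pow_three_sub_C_mul_X_X h2 h3 (one_ne_zero (α := F))
  · simpa using not_sidonEquiv_X_pow_three_sub_C_mul_X_X_sq_of_isSquare h2
      (one_ne_zero (α := F)) IsSquare.one
  · have := card_le_five_of_sidonEquiv h2 h3 hk' h
    have := card_mod_six_eq_one_or_five h2 h3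
    have := Fintype.one_lt_card (α := F)
    omega
end
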